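/- arXiv:dg-ga/9503014 — 2 statements merged into one kernel-verified Lean document; each statement's English description precedes it below -/
import Mathlib

section
/- Let E be a complex Banach space, U ⊆ ℂ a nonempty open connected set, and R : U → B(E) an analytic family of operators such that R(λ) is a compact operator for every λ ∈ U. Suppose there exists λ₀ ∈ U such that id + R(λ₀) is injective. Then the set S = {λ ∈ U : id + R(λ) is not invertible in B(E)} is closed in U and discrete (i.e., S has no accumulation point in U), and the map λ ↦ (id + R(λ))⁻¹ is analytic on U \ S. -/
/-!
If `T z` is Fredholm of index zero, then `G z = T z + F` is invertible for some `F` of finite rank,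
and near `z` the family factors as `T w = (1 - F G(w)⁻¹) G(w)`. Since `F` has finite rank, `T w` is
invertible exactly when the determinant of the endomorphism of `range F` induced by `1 - F G(w)⁻¹`
does not vanish. This determinant is analytic in `w`, so near each point `T w` is either invertible
throughout a punctured neighbourhood or invertible nowhere in one. By connectedness the first
alternative holds everywhere as soon as it holds at a single point.

For compact `K`, a noninjective `1 + K` is also nonsurjective, so a rank-one perturbation that sends
a kernel vector outside the range strictly shrinks the kernel. As the kernel is finite-dimensional,
finitely many such perturbations make `1 + K` injective, hence invertible.
-/

open Filter Topology

theorem eventually_nhdsNE_of_isPreconnected {X : Type*} [TopologicalSpace X] [T1Space X]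
    [∀ x : X, (𝓝[≠] x).NeBot] {U : Set X} (hU : IsPreconnected U) {p : X → Prop}
    (hp : ∀ x ∈ U, (∀ᶠ y in 𝓝[≠] x, p y) ∨ ∀ᶠ y in 𝓝[≠] x, ¬ p y)
    (h₀ : ∃ x ∈ U, ∀ᶠ y in 𝓝[≠] x, p y) :
    ∀ x ∈ U, ∀ᶠ y in 𝓝[≠] x, p y := by
  have isOpen_eventually (q : X → Prop) : IsOpen {x | ∀ᶠ y in 𝓝[≠] x, q y} := by
    rw [isOpen_iff_eventually]
    intro x hx
    have hx' : ∀ᶠ y in 𝓝[≠] x, ∀ᶠ z in 𝓝[≠] y, q z :=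
      (eventually_nhdsNE_eventually_nhds_iff.mpr hx).mono fun y hy =>
        hy.filter_mono nhdsWithin_le_nhds
    rw [eventually_nhdsWithin_iff] at hx'
    filter_upwards [hx'] with y hy
    rcases eq_or_ne y x with rfl | hne
    · exact hx
    · exact hy hne
  intro x hx
  refine (hp x hx).resolve_right fun hnot => ?_
  obtain ⟨x₀, hx₀, h₀⟩ := h₀
  obtain ⟨z, -, hz : ∀ᶠ y in 𝓝[≠] z, p y, hz' : ∀ᶠ y in 𝓝[≠] z, ¬ p y⟩ :=
    hU _ _ (isOpen_eventually p) (isOpen_eventually (¬ p ·)) hp ⟨x₀, hx₀, h₀⟩ ⟨x, hx, hnot⟩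
  obtain ⟨y, hy, hy'⟩ := (hz.and hz').exists
  exact hy' hy

section CompactPerturbation

variable {𝕜 E F : Type*} [NontriviallyNormedField 𝕜]
  [NormedAddCommGroup E] [NormedSpace 𝕜 E] [NormedAddCommGroup F] [NormedSpace 𝕜 F]

theorem isUnit_one_add_of_isCompactOperator_of_injective [CompleteSpace E] {K : E →L[𝕜] E}
    (hK : IsCompactOperator K) (hinj : Function.Injective (1 + K : E →L[𝕜] E)) :
    IsUnit (1 + K) := by
  have hneg : -1 ∈ resolventSet 𝕜 K := by
    refine (hK.hasEigenvalue_or_mem_resolventSet (neg_ne_zero.mpr one_ne_zero)).resolve_left ?_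
    intro h
    obtain ⟨v, hv⟩ := h.exists_hasEigenvector
    have hKv : K v = -v := by simpa using hv.apply_eq_smul
    exact hv.2 (hinj (by simp [hKv]))
  rw [spectrum.mem_resolventSet_iff, ← IsUnit.neg_iff] at hneg
  simpa [add_comm] using hneg

theorem finiteDimensional_ker_one_add_of_isCompactOperator [CompleteSpace 𝕜] {K : E →L[𝕜] E}
    (hK : IsCompactOperator K) : FiniteDimensional 𝕜 (1 + K : E →L[𝕜] E).ker := by
  set N := (1 + K : E →L[𝕜] E).ker with hN
  have hneg (x : E) (hx : x ∈ N) : K x = -x :=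
    eq_neg_of_add_eq_zero_right (by simpa [hN] using hx)
  have hmaps (x : E) (hx : x ∈ N) : (K : E →ₗ[𝕜] E) x ∈ N := by
    simpa [hneg x hx] using hx
  have hrestrict : -((K : E →ₗ[𝕜] E).restrict hmaps) = LinearMap.id := by
    ext x
    simp [hneg x x.2]
  have hcompact : IsCompactOperator (-((K : E →ₗ[𝕜] E).restrict hmaps)) :=
    (IsCompactOperator.restrict hK hmaps (1 + K : E →L[𝕜] E).isClosed_ker).neg
  rw [hrestrict] at hcompact
  exact .of_isCompactOperator_id hcompact

theorem hasRightInverse_of_surjective_of_closedComplemented_ker [CompleteSpace E] [CompleteSpace F]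
    {T : E →L[𝕜] F} (hT : Function.Surjective T) (hker : T.ker.ClosedComplemented) :
    T.HasRightInverse := by
  obtain ⟨P, hP⟩ := hker
  let e := T.equivProdOfSurjectiveOfIsCompl P (LinearMap.range_eq_top.mpr hT)
    (LinearMap.range_eq_top.mpr fun x => ⟨x, hP x⟩) (LinearMap.isCompl_of_proj hP)
  exact ⟨e.symm.toContinuousLinearMap ∘L .inl 𝕜 F _,
    fun y => congrArg Prod.fst (e.apply_symm_apply (y, 0))⟩

theorem isUnit_one_add_of_isCompactOperator_of_hasRightInverse [CompleteSpace E] {K : E →L[𝕜] E}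
    (hK : IsCompactOperator K) (hright : (1 + K : E →L[𝕜] E).HasRightInverse) :
    IsUnit (1 + K) := by
  obtain ⟨B, hB⟩ := hright
  have hmul : (1 + K) * B = 1 := ContinuousLinearMap.ext hB
  -- `B` is itself an injective compact perturbation of the identity.
  have hB_eq : 1 + -(K * B) = B := by
    rw [← sub_eq_add_neg, sub_eq_iff_eq_add, ← one_add_mul, hmul]
  have hB_unit : IsUnit B := by
    rw [← hB_eq]
    refine isUnit_one_add_of_isCompactOperator_of_injective (hK.comp_clm B).neg ?_
    rw [hB_eq]
    exact hB.injective
  exact hB_unit.mul_right_iff.mp (by rw [hmul]; exact isUnit_one)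

theorem exists_ker_add_smulRight_lt [SeparatingDual 𝕜 E] {T : E →L[𝕜] F}
    (hinj : ¬ Function.Injective T) (hsurj : ¬ Function.Surjective T) :
    ∃ (f : E →L[𝕜] 𝕜) (y : F), (T + f.smulRight y).ker < T.ker := by
  obtain ⟨x, hx, hx0⟩ : ∃ x, T x = 0 ∧ x ≠ 0 := by
    simpa [injective_iff_map_eq_zero] using hinj
  obtain ⟨y, hy⟩ : ∃ y, ∀ v, T v ≠ y := by
    simpa [Function.Surjective] using hsurj
  obtain ⟨f, hfx⟩ := SeparatingDual.exists_eq_one (R := 𝕜) hx0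
  have hf (v : E) (hv : v ∈ (T + f.smulRight y).ker) : f v = 0 := by
    by_contra hne
    have hTv : T v = -(f v • y) := eq_neg_of_add_eq_zero_left (by simpa using hv)
    exact hy (-(f v)⁻¹ • v) (by simp [hTv, hne])
  refine ⟨f, y, SetLike.lt_iff_le_and_exists.mpr ⟨fun v hv => ?_, x, hx, fun hx' => ?_⟩⟩
  · simpa [hf v hv] using hv
  · simp [hf x hx'] at hfx

end CompactPerturbation

section FredholmIndexZero

variable {𝕜 E : Type*} [NontriviallyNormedField 𝕜] [NormedAddCommGroup E] [NormedSpace 𝕜 E]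

/-- A Fredholm operator of index zero, encoded as a bounded operator which becomes invertible
after adding a bounded operator of finite rank. -/
def IsFredholmIndexZero (T : E →L[𝕜] E) : Prop :=
  ∃ F : E →L[𝕜] E, (F : E →ₗ[𝕜] E).HasFiniteRange ∧ IsUnit (T + F)

theorem IsFredholmIndexZero.of_add_hasFiniteRange {T F : E →L[𝕜] E}
    (hF : (F : E →ₗ[𝕜] E).HasFiniteRange) (h : IsFredholmIndexZero (T + F)) :
    IsFredholmIndexZero T := by
  obtain ⟨G, hG, hunit⟩ := h
  exact ⟨F + G, hF.add hG, by rwa [← add_assoc]⟩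

end FredholmIndexZero

theorem isFredholmIndexZero_one_add_of_isCompactOperator {𝕜 E : Type*} [RCLike 𝕜]
    [NormedAddCommGroup E] [NormedSpace 𝕜 E] [CompleteSpace E] {K : E →L[𝕜] E}
    (hK : IsCompactOperator K) : IsFredholmIndexZero (1 + K) := by
  have := finiteDimensional_ker_one_add_of_isCompactOperator hK
  induction hn : Module.finrank 𝕜 (1 + K : E →L[𝕜] E).ker using Nat.strong_induction_on
    generalizing K with
  | _ n ih =>
  by_cases hunit : IsUnit (1 + K)
  · exact ⟨0, .zero, by simpa using hunit⟩
  have hinj : ¬ Function.Injective (1 + K : E →L[𝕜] E) :=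
    mt (isUnit_one_add_of_isCompactOperator_of_injective hK) hunit
  have hsurj : ¬ Function.Surjective (1 + K : E →L[𝕜] E) := fun h =>
    hunit <| isUnit_one_add_of_isCompactOperator_of_hasRightInverse hK <|
      hasRightInverse_of_surjective_of_closedComplemented_ker h (.of_finiteDimensional _)
  obtain ⟨f, y, hlt⟩ := exists_ker_add_smulRight_lt hinj hsurj
  have hF : IsCompactOperator (f.smulRight y) :=
    (isCompactOperator_of_locallyCompactSpace_dom f).clm_comp (.toSpanSingleton 𝕜 y)
  have hF' : (f.smulRight y : E →ₗ[𝕜] E).HasFiniteRange :=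
    (LinearMap.HasFiniteRange.of_isNoetherian_rng (f := (f : E →ₗ[𝕜] 𝕜))).comp_left
      (.toSpanSingleton 𝕜 E y)
  have hKF : IsCompactOperator (K + f.smulRight y) := hK.add hF
  rw [add_assoc] at hlt
  refine .of_add_hasFiniteRange hF' ?_
  rw [add_assoc]
  exact ih _ (hn ▸ Submodule.finrank_lt_finrank_of_lt hlt) hKF
    (finiteDimensional_ker_one_add_of_isCompactOperator hKF) rfl

section Determinant

variable {𝕜 V : Type*} [NontriviallyNormedField 𝕜] [CompleteSpace 𝕜]
  [NormedAddCommGroup V] [NormedSpace 𝕜 V] [FiniteDimensional 𝕜 V]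

theorem isUnit_iff_det_ne_zero (A : V →L[𝕜] V) : IsUnit A ↔ A.det ≠ 0 := by
  have : CompleteSpace V := FiniteDimensional.complete 𝕜 V
  rw [ContinuousLinearMap.isUnit_iff_isUnit_toLinearMap, LinearMap.isUnit_iff_isUnit_det,
    isUnit_iff_ne_zero, ContinuousLinearMap.det]

theorem analyticAt_continuousLinearMap_det (A : V →L[𝕜] V) :
    AnalyticAt 𝕜 ContinuousLinearMap.det A := by
  let b := Module.finBasis 𝕜 V
  have hentry (i j) : AnalyticAt 𝕜 (fun B : V →L[𝕜] V => LinearMap.toMatrix b b B i j) A := by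
    simp only [LinearMap.toMatrix_apply]
    exact (LinearMap.toContinuousLinearMap (b.coord i) ∘L
      ContinuousLinearMap.apply 𝕜 V (b j)).analyticAt A
  have hdet : ContinuousLinearMap.det = fun B : V →L[𝕜] V =>
      ∑ σ, (Equiv.Perm.sign σ : 𝕜) * ∏ i, LinearMap.toMatrix b b B (σ i) i := by
    ext B
    rw [ContinuousLinearMap.det, ← LinearMap.det_toMatrix b, Matrix.det_apply']
  rw [hdet]
  exact Finset.univ.analyticAt_fun_sum fun σ _ =>
    analyticAt_const.mul (Finset.univ.analyticAt_fun_prod fun i _ => hentry (σ i) i)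

end Determinant

theorem isUnit_one_sub_comp_swap {R E V : Type*} [Ring R]
    [AddCommGroup E] [Module R E] [TopologicalSpace E] [IsTopologicalAddGroup E]
    [AddCommGroup V] [Module R V] [TopologicalSpace V] [IsTopologicalAddGroup V]
    {A : V →L[R] E} {B : E →L[R] V} (h : IsUnit (1 - B ∘L A)) : IsUnit (1 - A ∘L B) := by
  obtain ⟨C, hC, hC'⟩ := isUnit_iff_exists.mp h
  replace hC (v : V) : C v - B (A (C v)) = v := by simpa using congr($hC v)
  replace hC' (v : V) : C v - C (B (A v)) = v := by simpa using congr($hC' v)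
  refine isUnit_iff_exists.mpr ⟨1 + A ∘L C ∘L B, ?_, ?_⟩ <;> ext x
  · have hx : A (C (B x)) - A (B (A (C (B x)))) = A (B x) := by rw [← map_sub, hC]
    calc _ = x + (A (C (B x)) - A (B (A (C (B x))))) - A (B x) := by
          simp only [mul_apply_eq_comp, add_apply, sub_apply, one_apply_eq_self,
            ContinuousLinearMap.comp_apply, map_add]
          abel
      _ = x := by rw [hx, add_sub_cancel_right]
  · have hx : A (C (B x)) - A (C (B (A (B x)))) = A (B x) := by rw [← map_sub, hC']
    calc _ = x + (A (C (B x)) - A (C (B (A (B x))))) - A (B x) := by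
          simp only [mul_apply_eq_comp, add_apply, sub_apply, one_apply_eq_self,
            ContinuousLinearMap.comp_apply, map_sub]
          abel
      _ = x := by rw [hx, add_sub_cancel_right]

theorem isUnit_one_sub_comp_comm {R E V : Type*} [Ring R]
    [AddCommGroup E] [Module R E] [TopologicalSpace E] [IsTopologicalAddGroup E]
    [AddCommGroup V] [Module R V] [TopologicalSpace V] [IsTopologicalAddGroup V]
    (A : V →L[R] E) (B : E →L[R] V) : IsUnit (1 - A ∘L B) ↔ IsUnit (1 - B ∘L A) :=
  ⟨isUnit_one_sub_comp_swap, isUnit_one_sub_comp_swap⟩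

section AnalyticFamily

variable {𝕜 E : Type*} [NontriviallyNormedField 𝕜] [CompleteSpace 𝕜]
  [NormedAddCommGroup E] [NormedSpace 𝕜 E] [CompleteSpace E]

theorem exists_analyticAt_isUnit_iff_ne_zero {M : Type*} [NormedAddCommGroup M] [NormedSpace 𝕜 M]
    {T : M → E →L[𝕜] E} {z : M} (hT : AnalyticAt 𝕜 T z) (hz : IsFredholmIndexZero (T z)) :
    ∃ d : M → 𝕜, AnalyticAt 𝕜 d z ∧ ∀ᶠ w in 𝓝 z, (IsUnit (T w) ↔ d w ≠ 0) := by
  obtain ⟨F, hF, hunit⟩ := hz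
  set V := (F : E →ₗ[𝕜] E).range
  have : FiniteDimensional 𝕜 V := .of_fg hF
  let P : E →L[𝕜] V := F.codRestrict V fun x => ⟨x, rfl⟩
  let L : (E →L[𝕜] E) →L[𝕜] V →L[𝕜] V := .precomp V V.subtypeL ∘L .postcomp E P
  have hG : AnalyticAt 𝕜 (fun w => T w + F) z := hT.add analyticAt_const
  have hGinv : AnalyticAt 𝕜 (fun w => Ring.inverse (T w + F)) z :=
    AnalyticAt.fun_comp (f := fun w => T w + F) (analyticOnNhd_inverse _ hunit) hG
  have hA : AnalyticAt 𝕜 (fun w => 1 - L (Ring.inverse (T w + F))) z :=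
    analyticAt_const.sub ((L.analyticAt _).fun_comp hGinv)
  refine ⟨fun w => (1 - L (Ring.inverse (T w + F))).det,
    (analyticAt_continuousLinearMap_det _).fun_comp hA, ?_⟩
  filter_upwards [hG.continuousAt.eventually (Units.isOpen.mem_nhds hunit)] with w hw
  have hfactor : (1 - V.subtypeL ∘L P ∘L Ring.inverse (T w + F)) * (T w + F) = T w := by
    change (1 - F * Ring.inverse (T w + F)) * (T w + F) = T w
    rw [sub_mul, one_mul, mul_assoc, Ring.inverse_mul_cancel _ hw, mul_one, add_sub_cancel_right]
  calc IsUnit (T w)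
      ↔ IsUnit ((1 - V.subtypeL ∘L P ∘L Ring.inverse (T w + F)) * (T w + F)) := by rw [hfactor]
    _ ↔ IsUnit (1 - V.subtypeL ∘L P ∘L Ring.inverse (T w + F)) := hw.mul_right_iff
    _ ↔ IsUnit (1 - L (Ring.inverse (T w + F))) := isUnit_one_sub_comp_comm _ _
    _ ↔ (1 - L (Ring.inverse (T w + F))).det ≠ 0 := isUnit_iff_det_ne_zero _

theorem eventually_isUnit_or_eventually_not_isUnit {T : 𝕜 → E →L[𝕜] E} {z : 𝕜}
    (hT : AnalyticAt 𝕜 T z) (hz : IsFredholmIndexZero (T z)) :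
    (∀ᶠ w in 𝓝[≠] z, IsUnit (T w)) ∨ ∀ᶠ w in 𝓝[≠] z, ¬ IsUnit (T w) := by
  obtain ⟨d, hd, hiff⟩ := exists_analyticAt_isUnit_iff_ne_zero hT hz
  have hiff' := hiff.filter_mono (nhdsWithin_le_nhds (s := {z}ᶜ))
  rcases hd.eventually_eq_zero_or_eventually_ne_zero with hzero | hne
  · right
    filter_upwards [hzero.filter_mono nhdsWithin_le_nhds, hiff'] with w hw hiff
    simpa [hiff] using hw
  · left
    filter_upwards [hne, hiff'] with w hw hiff
    exact hiff.mpr hw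

theorem analytic_fredholm_general {U : Set 𝕜} (hU : IsPreconnected U) {T : 𝕜 → E →L[𝕜] E}
    (hT : AnalyticOnNhd 𝕜 T U) (hfred : ∀ z ∈ U, IsFredholmIndexZero (T z))
    (h₀ : ∃ z₀ ∈ U, IsUnit (T z₀)) :
    (∀ z ∈ U, z ∈ closure {w ∈ U | ¬ IsUnit (T w)} → ¬ IsUnit (T z)) ∧
    (∀ z ∈ U, ¬ AccPt z (𝓟 {w ∈ U | ¬ IsUnit (T w)})) ∧
    AnalyticOnNhd 𝕜 (fun z => Ring.inverse (T z)) (U \ {w ∈ U | ¬ IsUnit (T w)}) := by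
  have hopen (z) (hz : z ∈ U) (hunit : IsUnit (T z)) : ∀ᶠ w in 𝓝 z, IsUnit (T w) :=
    (hT z hz).continuousAt.eventually (Units.isOpen.mem_nhds hunit)
  have hpunctured : ∀ z ∈ U, ∀ᶠ w in 𝓝[≠] z, IsUnit (T w) :=
    eventually_nhdsNE_of_isPreconnected hU
      (fun z hz => eventually_isUnit_or_eventually_not_isUnit (hT z hz) (hfred z hz))
      (h₀.imp fun z₀ ⟨hz₀, hunit⟩ => ⟨hz₀, (hopen z₀ hz₀ hunit).filter_mono nhdsWithin_le_nhds⟩)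
  refine ⟨fun z hz hclosure hunit => ?_, fun z hz hacc => ?_, fun z ⟨hz, hzS⟩ => ?_⟩
  · obtain ⟨w, hw, hw'⟩ :=
      ((mem_closure_iff_frequently.mp hclosure).and_eventually (hopen z hz hunit)).exists
    exact hw.2 hw'
  · obtain ⟨w, hw, hw'⟩ :=
      ((accPt_iff_frequently_nhdsNE.mp hacc).and_eventually (hpunctured z hz)).exists
    exact hw.2 hw'
  · have hunit : IsUnit (T z) := not_not.mp fun h => hzS ⟨hz, h⟩
    exact (analyticOnNhd_inverse _ hunit).fun_comp (hT z hz)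

end AnalyticFamily

/-- **Analytic Fredholm theorem.**  Let `E` be a complex Banach space, `U ⊆ ℂ` a nonempty
open connected set and `R : U → B(E)` an analytic family of compact operators such that
`id + R λ₀` is injective for some `λ₀ ∈ U`.  Then the set `S` of parameters where
`id + R λ` fails to be invertible is closed in `U` and has no accumulation point in `U`,
and `λ ↦ (id + R λ)⁻¹` is analytic on `U \ S`. -/
theorem analytic_fredholm
    {E : Type*} [NormedAddCommGroup E] [NormedSpace ℂ E] [CompleteSpace E]
    {U : Set ℂ} (hUopen : IsOpen U) (hUne : U.Nonempty) (hUconn : IsConnected U)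
    (R : ℂ → E →L[ℂ] E) (hRan : AnalyticOnNhd ℂ R U)
    (hRcpt : ∀ z ∈ U, IsCompactOperator (R z))
    (hinj : ∃ z₀ ∈ U, Function.Injective ((1 + R z₀ : E →L[ℂ] E) : E → E)) :
    (∀ z ∈ U, z ∈ closure {w ∈ U | ¬ IsUnit (1 + R w)} → ¬ IsUnit (1 + R z)) ∧
    (∀ z ∈ U, ¬ AccPt z (𝓟 {w ∈ U | ¬ IsUnit (1 + R w)})) ∧
    AnalyticOnNhd ℂ (fun z => Ring.inverse (1 + R z))
      (U \ {w ∈ U | ¬ IsUnit (1 + R w)}) := by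
  obtain ⟨z₀, hz₀, hinj⟩ := hinj
  exact analytic_fredholm_general hUconn.isPreconnected (analyticOnNhd_const.add hRan)
    (fun z hz => isFredholmIndexZero_one_add_of_isCompactOperator (hRcpt z hz))
    ⟨z₀, hz₀, isUnit_one_add_of_isCompactOperator_of_injective (hRcpt z₀ hz₀) hinj⟩
end

section
/- Let E be a complex Banach space, U ⊆ ℂ a nonempty open connected set, and R : U → B(E) an analytic family of operators such that R(λ) is a compact operator for every λ ∈ U, and suppose id + R(λ₀) is injective for some λ₀ ∈ U. Let λ₁ ∈ U be a point at which id + R(λ₁) is not invertible. Then there exist an integer N ≥ 1, finite-rank operators F₁, …, F_N ∈ B(E), an open neighbourhood V ⊆ U of λ₁, and an analytic map H : V → B(E), such that for every λ ∈ V with λ ≠ λ₁ the operator id + R(λ) is invertible and (id + R(λ))⁻¹ = H(λ) + Σ_{j=1}^{N} (λ − λ₁)^{−j} F_j. In particular, the singularities of the inverse family are finite dimensional. -/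
open Filter Topology

/-!
Let `T z = 1 + R z`. By Riesz–Schauder theory `T z₁ + G` is invertible for some `G` of finite rank,
and then so is `A z = T z + G` for `z` near `z₁`. Factor `G = P ∘ Q` through its range. By the Schur
complement, `T z = A z - P ∘ Q` is invertible exactly when `D z = 1 - Q (A z)⁻¹ P` is, and
`(T z)⁻¹ = (A z)⁻¹ + (A z)⁻¹ P (D z)⁻¹ Q (A z)⁻¹`. Since `D z` acts on a finite-dimensional space,
Cramer's rule makes `(D z)⁻¹` meromorphic, and the singular term factors through that space, so its
polar coefficients have finite rank. The formula holds where `T z` is invertible; as `Ring.inverse`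
is `0` off the units, `(T z)⁻¹` is meromorphic on all of `U` in any case, and the identity
theorem on the connected set `U` carries invertibility from near `z₀` to near `z₁`.
-/

open scoped Ring

section CompactPerturbation

variable {𝕜 E F : Type*} [NontriviallyNormedField 𝕜]
  [NormedAddCommGroup E] [NormedSpace 𝕜 E] [NormedAddCommGroup F] [NormedSpace 𝕜 F]

/-- `T` is invertible up to a bounded operator of finite rank. On a Banach space these are the
Fredholm operators of index zero. -/
def IsUnitModFiniteRank (T : E →L[𝕜] E) : Prop :=
  ∃ G : E →L[𝕜] E, (G : E →ₗ[𝕜] E).HasFiniteRange ∧ IsUnit (T + G)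

theorem finiteDimensional_ker_one_add [CompleteSpace 𝕜] {K : E →L[𝕜] E}
    (hK : IsCompactOperator K) : FiniteDimensional 𝕜 (1 + K).ker := by
  have hneg : ∀ x ∈ (1 + K).ker, (-K) x = x := fun x hx ↦
    (eq_neg_of_add_eq_zero_left (by simpa using hx)).symm
  have hmaps : ∀ x ∈ (1 + K).ker, (-K).toLinearMap x ∈ (1 + K).ker := fun x hx ↦ by
    simpa only [ContinuousLinearMap.coe_coe, hneg x hx] using hx
  have hid : ⇑((-K).toLinearMap.restrict hmaps) = id :=
    funext fun x ↦ Subtype.ext (hneg x x.2)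
  have hcompact := IsCompactOperator.restrict hK.neg hmaps (1 + K).isClosed_ker
  exact .of_isCompactOperator_id (hid ▸ hcompact)

theorem isUnit_one_add_of_injective [CompleteSpace E] {K : E →L[𝕜] E} (hK : IsCompactOperator K)
    (hinj : Function.Injective ⇑(1 + K)) : IsUnit (1 + K) := by
  obtain heig | hres := hK.hasEigenvalue_or_mem_resolventSet (neg_ne_zero.2 one_ne_zero)
  · obtain ⟨v, hv⟩ := heig.exists_hasEigenvector
    have hKv : K v = -v := by simpa using hv.apply_eq_smul
    exact absurd (hinj (by simp [hKv])) hv.2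
  · simpa [add_comm] using (spectrum.mem_resolventSet_iff.1 hres).neg

theorem hasRightInverse_of_closedComplemented_ker [CompleteSpace E] [CompleteSpace F]
    {T : E →L[𝕜] F} (hsurj : Function.Surjective T) (hker : T.ker.ClosedComplemented) :
    T.HasRightInverse := by
  obtain ⟨p, hp⟩ := hker
  have : CompleteSpace T.ker := T.isClosed_ker.completeSpace_coe
  let e : E ≃L[𝕜] F × T.ker := T.equivProdOfSurjectiveOfIsCompl p
    (LinearMap.range_eq_top.2 hsurj) (LinearMap.range_eq_of_proj hp) (LinearMap.isCompl_of_proj hp)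
  exact ⟨(e.symm : F × T.ker →L[𝕜] E) ∘L .inl 𝕜 F T.ker,
    fun y ↦ congrArg Prod.fst (e.apply_symm_apply (y, 0))⟩

theorem ker_add_smulRight_lt {T : E →L[𝕜] F} {f : E →L[𝕜] 𝕜} {x : E} {y : F}
    (hx : x ∈ T.ker) (hfx : f x ≠ 0) (hy : y ∉ T.range) : (T + f.smulRight y).ker < T.ker := by
  have hmem : ∀ v ∈ (T + f.smulRight y).ker, f v = 0 ∧ v ∈ T.ker := fun v hv ↦ by
    have hTv : T v + f v • y = 0 := by simpa using hv
    have hfv : f v = 0 := by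
      by_contra hne
      exact hy ⟨-(f v)⁻¹ • v, by simp [eq_neg_of_add_eq_zero_left hTv, smul_smul, hne]⟩
    exact ⟨hfv, by simpa [hfv] using hTv⟩
  exact SetLike.lt_iff_le_and_exists.2
    ⟨fun v hv ↦ (hmem v hv).2, x, hx, fun hx' ↦ hfx (hmem x hx').1⟩

end CompactPerturbation

section RieszSchauder

variable {𝕜 E : Type*} [RCLike 𝕜] [NormedAddCommGroup E] [NormedSpace 𝕜 E] [CompleteSpace E]

theorem isUnit_one_add_of_surjective {K : E →L[𝕜] E} (hK : IsCompactOperator K)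
    (hsurj : Function.Surjective ⇑(1 + K)) : IsUnit (1 + K) := by
  have := finiteDimensional_ker_one_add hK
  obtain ⟨S, hS⟩ := hasRightInverse_of_closedComplemented_ker hsurj (.of_finiteDimensional _)
  have hmul : (1 + K) * S = 1 := ContinuousLinearMap.ext hS
  -- The right inverse is itself a compact perturbation of `1`, so the injective case applies to it.
  have hS_eq : S = 1 + -(K * S) := by
    rw [add_mul, one_mul] at hmul
    rw [← hmul, add_neg_cancel_right]
  have hSunit : IsUnit S := by
    rw [hS_eq]
    exact isUnit_one_add_of_injective (hK.comp_clm S).neg (hS_eq ▸ hS.injective)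
  exact (hSunit.unit.isUnit_mul_units (1 + K)).1 (by simp [hmul])

theorem exists_rankOne_ker_lt {K : E →L[𝕜] E} (hK : IsCompactOperator K) (hu : ¬ IsUnit (1 + K)) :
    ∃ (f : E →L[𝕜] 𝕜) (y : E), (1 + K + f.smulRight y).ker < (1 + K).ker := by
  have hker : (1 + K).ker ≠ ⊥ := fun h ↦
    hu (isUnit_one_add_of_injective hK (LinearMap.ker_eq_bot.1 h))
  obtain ⟨x, hx, hx0⟩ := Submodule.exists_mem_ne_zero_of_ne_bot hker
  obtain ⟨y, hy⟩ := not_forall.1 (mt (isUnit_one_add_of_surjective hK) hu)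
  obtain ⟨f, hfx⟩ := SeparatingDual.exists_ne_zero (R := 𝕜) hx0
  exact ⟨f, y, ker_add_smulRight_lt hx hfx hy⟩

theorem isUnitModFiniteRank_one_add {K : E →L[𝕜] E} (hK : IsCompactOperator K) :
    IsUnitModFiniteRank (1 + K) := by
  induction hn : Module.finrank 𝕜 (1 + K).ker using Nat.strong_induction_on generalizing K with
  | _ n ih =>
  by_cases hu : IsUnit (1 + K)
  · exact ⟨0, .zero, by rwa [add_zero]⟩
  obtain ⟨f, y, hlt⟩ := exists_rankOne_ker_lt hK hu
  have hfin := finiteDimensional_ker_one_add hK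
  have hcompact : IsCompactOperator (K + f.smulRight y) := hK.add
    ((isCompactOperator_of_locallyCompactSpace_rng (.toSpanSingleton 𝕜 y)).comp_clm f)
  rw [add_assoc] at hlt
  obtain ⟨G, hG, hunit⟩ := ih _ (hn ▸ Submodule.finrank_lt_finrank_of_lt hlt) hcompact rfl
  have hrank : (f.smulRight y : E →ₗ[𝕜] E).HasFiniteRange :=
    (LinearMap.HasFiniteRange.of_finite_dom (f := .toSpanSingleton 𝕜 E y)).comp_right f.toLinearMap
  exact ⟨f.smulRight y + G, hrank.add hG, by simpa only [add_assoc] using hunit⟩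

end RieszSchauder

section SchurComplement

variable {R M N : Type*} [Ring R]
  [AddCommGroup M] [TopologicalSpace M] [IsTopologicalAddGroup M] [Module R M]
  [AddCommGroup N] [TopologicalSpace N] [Module R N]
  {A : M →L[R] M} {P : N →L[R] M} {Q : M →L[R] N}

theorem sub_comp_eq_mul (hA : IsUnit A) : A - P ∘L Q = A * (1 - (A⁻¹ʳ ∘L P) ∘L Q) := by
  rw [mul_sub, mul_one]
  congr 1
  change _ = (A * A⁻¹ʳ) ∘L (P ∘L Q)
  rw [Ring.mul_inverse_cancel _ hA, ContinuousLinearMap.one_def, ContinuousLinearMap.id_comp]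

variable [IsTopologicalAddGroup N]

theorem one_sub_comp_mul_eq_one {X : N →L[R] N} (hX : (1 - Q ∘L P) * X = 1) :
    (1 - P ∘L Q) * (1 + P ∘L X ∘L Q) = 1 := by
  ext x
  have hXx : X (Q x) = Q x + Q (P (X (Q x))) := sub_eq_iff_eq_add.1 (DFunLike.congr_fun hX (Q x))
  calc x + P (X (Q x)) - P (Q (x + P (X (Q x))))
      = x + (P (X (Q x)) - P (Q x + Q (P (X (Q x))))) := by rw [map_add, add_sub_assoc]
    _ = x := by rw [← hXx, sub_self, add_zero]

theorem mul_one_sub_comp_eq_one {X : N →L[R] N} (hX : X * (1 - Q ∘L P) = 1) :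
    (1 + P ∘L X ∘L Q) * (1 - P ∘L Q) = 1 := by
  ext x
  have hXx : X (Q x - Q (P (Q x))) = Q x := DFunLike.congr_fun hX (Q x)
  calc x - P (Q x) + P (X (Q (x - P (Q x))))
      = x - P (Q x) + P (X (Q x - Q (P (Q x)))) := by rw [map_sub]
    _ = x := by rw [hXx, sub_add_cancel]

theorem isUnit_one_sub_comp (h : IsUnit (1 - Q ∘L P)) : IsUnit (1 - P ∘L Q) :=
  ⟨⟨_, _, one_sub_comp_mul_eq_one (Ring.mul_inverse_cancel _ h),
    mul_one_sub_comp_eq_one (Ring.inverse_mul_cancel _ h)⟩, rfl⟩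

theorem inverse_one_sub_comp (h : IsUnit (1 - Q ∘L P)) :
    (1 - P ∘L Q)⁻¹ʳ = 1 + P ∘L (1 - Q ∘L P)⁻¹ʳ ∘L Q := by
  rw [← mul_one (1 - P ∘L Q)⁻¹ʳ, Ring.inverse_mul_eq_iff_eq_mul _ _ _ (isUnit_one_sub_comp h),
    one_sub_comp_mul_eq_one (Ring.mul_inverse_cancel _ h)]

theorem isUnit_sub_comp_iff (hA : IsUnit A) :
    IsUnit (A - P ∘L Q) ↔ IsUnit (1 - Q ∘L A⁻¹ʳ ∘L P) := by
  rw [sub_comp_eq_mul hA, hA.mul_left_iff]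
  exact ⟨isUnit_one_sub_comp, isUnit_one_sub_comp⟩

theorem inverse_sub_comp (hA : IsUnit A) (h : IsUnit (1 - Q ∘L A⁻¹ʳ ∘L P)) :
    (A - P ∘L Q)⁻¹ʳ =
      A⁻¹ʳ + (A⁻¹ʳ ∘L P ∘L (1 - Q ∘L A⁻¹ʳ ∘L P)⁻¹ʳ) ∘L (Q ∘L A⁻¹ʳ) := by
  rw [sub_comp_eq_mul hA, Ring.inverse_mul (.inl hA), inverse_one_sub_comp h, add_mul, one_mul]
  rfl

end SchurComplement

section MeromorphicInverse

theorem map_ringInverse {M N : Type*} [MonoidWithZero M] [MonoidWithZero N] (φ : M ≃* N) (x : M) :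
    φ x⁻¹ʳ = (φ x)⁻¹ʳ := by
  by_cases hx : IsUnit x
  · obtain ⟨u, rfl⟩ := hx
    rw [Ring.inverse_unit]
    exact (Ring.inverse_unit (Units.map φ.toMonoidHom u)).symm
  · rw [Ring.inverse_non_unit x hx, map_zero, Ring.inverse_non_unit]
    rwa [MulEquiv.isUnit_map]

variable {𝕜 n : Type*} [NontriviallyNormedField 𝕜] [Fintype n] [DecidableEq n] {z : 𝕜}

theorem meromorphicAt_det {A : 𝕜 → Matrix n n 𝕜} (hA : ∀ i j, MeromorphicAt (fun w ↦ A w i j) z) :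
    MeromorphicAt (fun w ↦ (A w).det) z := by
  simp only [Matrix.det_apply']
  fun_prop

theorem meromorphicAt_matrix_inv_apply {A : 𝕜 → Matrix n n 𝕜}
    (hA : ∀ i j, MeromorphicAt (fun w ↦ A w i j) z) (i j : n) :
    MeromorphicAt (fun w ↦ (A w)⁻¹ i j) z := by
  have hadjugate : MeromorphicAt (fun w ↦ (A w).adjugate i j) z := by
    simp only [Matrix.adjugate_apply]
    refine meromorphicAt_det fun k l ↦ ?_
    by_cases hk : k = j
    · simpa only [hk, Matrix.updateRow_self] using .const _ z
    · simpa only [Matrix.updateRow_ne hk] using hA k l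
  simp only [Matrix.inv_def, Matrix.smul_apply, smul_eq_mul, Ring.inverse_eq_inv]
  exact (meromorphicAt_det hA).inv.mul hadjugate

theorem meromorphicAt_inverse_of_finiteDimensional [CompleteSpace 𝕜] {W : Type*}
    [NormedAddCommGroup W] [NormedSpace 𝕜 W] [FiniteDimensional 𝕜 W]
    {D : 𝕜 → W →L[𝕜] W} (hD : AnalyticAt 𝕜 D z) : MeromorphicAt (fun w ↦ (D w)⁻¹ʳ) z := by
  let φ : (W →L[𝕜] W) ≃ₐ[𝕜] Matrix _ _ 𝕜 :=
    (Module.End.toContinuousLinearMap W).symm.trans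
      (LinearMap.toMatrixAlgEquiv (Module.finBasis 𝕜 W))
  have hentry : ∀ i j, MeromorphicAt (fun w ↦ φ (D w) i j) z := fun i j ↦
    ((LinearMap.toContinuousLinearMap
      (Matrix.entryLinearMap 𝕜 𝕜 i j ∘ₗ φ.toLinearMap)).analyticAt _ |>.comp hD).meromorphicAt
  have hexpand : ∀ w, (D w)⁻¹ʳ = ∑ i, ∑ j, (φ (D w))⁻¹ i j • φ.symm (Matrix.single i j 1) := by
    intro w
    apply φ.injective
    simp only [map_sum, map_smul, φ.apply_symm_apply, Matrix.smul_single, smul_eq_mul, mul_one]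
    rw [← Matrix.matrix_eq_sum_single, Matrix.nonsing_inv_eq_ringInverse]
    exact map_ringInverse φ.toMulEquiv (D w)
  simp only [hexpand]
  have := meromorphicAt_matrix_inv_apply hentry
  fun_prop

theorem eventually_isUnit_or_eventually_not_isUnit_s1 {𝔸 : Type*} [NormedRing 𝔸] [NormedAlgebra 𝕜 𝔸]
    {f : 𝕜 → 𝔸} (hf : MeromorphicAt (fun w ↦ (f w)⁻¹ʳ) z) :
    (∀ᶠ w in 𝓝[≠] z, IsUnit (f w)) ∨ ∀ᶠ w in 𝓝[≠] z, ¬ IsUnit (f w) := by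
  cases subsingleton_or_nontrivial 𝔸
  · exact .inl (.of_forall fun w ↦ isUnit_of_subsingleton (f w))
  · simpa only [Ring.isUnit_iff_inverse_ne_zero, not_not] using
      hf.eventually_eq_zero_or_eventually_ne_zero.symm

theorem eventually_isUnit_of_isPreconnected {𝔸 : Type*} [NormedRing 𝔸] [NormedAlgebra 𝕜 𝔸]
    {U : Set 𝕜} (hU : IsPreconnected U) {f : 𝕜 → 𝔸} (hf : MeromorphicOn (fun w ↦ (f w)⁻¹ʳ) U)
    {z₀ z₁ : 𝕜} (hz₀ : z₀ ∈ U) (hz₁ : z₁ ∈ U) (hunit : ∀ᶠ w in 𝓝[≠] z₀, IsUnit (f w)) :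
    ∀ᶠ w in 𝓝[≠] z₁, IsUnit (f w) := by
  cases subsingleton_or_nontrivial 𝔸
  · exact .of_forall fun w ↦ isUnit_of_subsingleton (f w)
  simp only [Ring.isUnit_iff_inverse_ne_zero] at hunit ⊢
  rw [← meromorphicOrderAt_ne_top_iff_eventually_ne_zero (hf _ ‹_›)] at hunit ⊢
  exact hf.meromorphicOrderAt_ne_top_of_isPreconnected hU hz₀ hz₁ hunit

end MeromorphicInverse

section PrincipalPart

variable {𝕜 W E F : Type*} [NontriviallyNormedField 𝕜]
  [NormedAddCommGroup W] [NormedSpace 𝕜 W] [NormedAddCommGroup E] [NormedSpace 𝕜 E]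
  [NormedAddCommGroup F] [NormedSpace 𝕜 F] {z₁ : 𝕜} {N : ℕ} {f g : 𝕜 → E →L[𝕜] F}

theorem analyticAt_clm_comp {P : 𝕜 → W →L[𝕜] F} {Q : 𝕜 → E →L[𝕜] W}
    (hP : AnalyticAt 𝕜 P z₁) (hQ : AnalyticAt 𝕜 Q z₁) : AnalyticAt 𝕜 (fun z ↦ P z ∘L Q z) z₁ :=
  ((ContinuousLinearMap.compL 𝕜 E W F).analyticAt_bilinear _).comp₂ hP hQ

theorem meromorphicAt_clm_comp {P : 𝕜 → W →L[𝕜] F} {Q : 𝕜 → E →L[𝕜] W}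
    (hP : MeromorphicAt P z₁) (hQ : MeromorphicAt Q z₁) :
    MeromorphicAt (fun z ↦ P z ∘L Q z) z₁ := by
  obtain ⟨m, hm⟩ := hP
  obtain ⟨n, hn⟩ := hQ
  refine ⟨n + m, (analyticAt_clm_comp hm hn).congr (.of_forall fun z ↦ ?_)⟩
  simp only [ContinuousLinearMap.smul_comp, ContinuousLinearMap.comp_smul, smul_smul, pow_add]

/-- On a punctured neighbourhood of `z₁`, `f` is the sum of a function analytic at `z₁` and of `N`
polar terms `(z - z₁)⁻¹ C₀ + ⋯ + (z - z₁)⁻ᴺ C_{N-1}` whose coefficients are operators of finite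
rank. Coefficients may vanish, so `N` only bounds the order of the pole. -/
def HasFiniteRankPrincipalPart (N : ℕ) (f : 𝕜 → E →L[𝕜] F) (z₁ : 𝕜) : Prop :=
  ∃ C : Fin N → E →L[𝕜] F, (∀ j, (C j : E →ₗ[𝕜] F).HasFiniteRange) ∧
    ∃ H : 𝕜 → E →L[𝕜] F, AnalyticAt 𝕜 H z₁ ∧
      ∀ᶠ z in 𝓝[≠] z₁, f z = H z + ∑ j : Fin N, (z - z₁) ^ (-(((j : ℕ) : ℤ) + 1)) • C j

namespace HasFiniteRankPrincipalPart

theorem congr (hf : HasFiniteRankPrincipalPart N f z₁) (hfg : f =ᶠ[𝓝[≠] z₁] g) :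
    HasFiniteRankPrincipalPart N g z₁ := by
  obtain ⟨C, hC, H, hH, hfH⟩ := hf
  refine ⟨C, hC, H, hH, ?_⟩
  filter_upwards [hfH, hfg] with z hz hz'
  rw [← hz', hz]

theorem of_analyticAt (hf : AnalyticAt 𝕜 f z₁) (N : ℕ) : HasFiniteRankPrincipalPart N f z₁ :=
  ⟨0, fun _ ↦ .zero, f, hf, .of_forall fun z ↦ by simp⟩

theorem add (hf : HasFiniteRankPrincipalPart N f z₁) (hg : HasFiniteRankPrincipalPart N g z₁) :
    HasFiniteRankPrincipalPart N (fun z ↦ f z + g z) z₁ := by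
  obtain ⟨C, hC, H, hH, hf⟩ := hf
  obtain ⟨D, hD, K, hK, hg⟩ := hg
  refine ⟨C + D, fun j ↦ (hC j).add (hD j), H + K, hH.add hK, ?_⟩
  filter_upwards [hf, hg] with z hfz hgz
  simp only [hfz, hgz, Pi.add_apply, smul_add, Finset.sum_add_distrib, add_add_add_comm]

theorem add_polarTerm (hf : HasFiniteRankPrincipalPart N f z₁) {C : E →L[𝕜] F}
    (hC : (C : E →ₗ[𝕜] F).HasFiniteRange) :
    HasFiniteRankPrincipalPart (N + 1)
      (fun z ↦ f z + (z - z₁) ^ (-((N : ℤ) + 1)) • C) z₁ := by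
  obtain ⟨D, hD, H, hH, hf⟩ := hf
  refine ⟨Fin.snoc D C, Fin.lastCases (by simpa using hC) (by simpa using hD), H, hH, ?_⟩
  filter_upwards [hf] with z hz
  simp [hz, Fin.sum_univ_castSucc, add_assoc]

theorem succ (hf : HasFiniteRankPrincipalPart N f z₁) :
    HasFiniteRankPrincipalPart (N + 1) f z₁ := by
  simpa only [smul_zero, add_zero] using hf.add_polarTerm (C := 0) .zero

end HasFiniteRankPrincipalPart

theorem analyticAt_dslope {f : 𝕜 → E} (hf : AnalyticAt 𝕜 f z₁) : AnalyticAt 𝕜 (dslope f z₁) z₁ :=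
  hf.elim fun _ hp ↦ ⟨_, hp.has_fpower_series_dslope_fslope⟩

theorem comp_eq_add_smul_dslope (P : 𝕜 → W →L[𝕜] F) (Q : 𝕜 → E →L[𝕜] W) (z₁ z : 𝕜) :
    P z ∘L Q z = P z₁ ∘L Q z₁ +
      (z - z₁) • (dslope P z₁ z ∘L Q z + P z₁ ∘L dslope Q z₁ z) := by
  rw [smul_add, ← ContinuousLinearMap.smul_comp, ← ContinuousLinearMap.comp_smul,
    sub_smul_dslope, sub_smul_dslope, ContinuousLinearMap.sub_comp, ContinuousLinearMap.comp_sub]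
  abel

theorem hasFiniteRankPrincipalPart_zpow_smul_comp [FiniteDimensional 𝕜 W]
    {P : 𝕜 → W →L[𝕜] F} {Q : 𝕜 → E →L[𝕜] W} (hP : AnalyticAt 𝕜 P z₁) (hQ : AnalyticAt 𝕜 Q z₁)
    (N : ℕ) :
    HasFiniteRankPrincipalPart N (fun z ↦ (z - z₁) ^ (-(N : ℤ)) • (P z ∘L Q z)) z₁ := by
  induction N generalizing P Q with
  | zero => simpa using .of_analyticAt (analyticAt_clm_comp hP hQ) 0
  | succ N ih =>
    have hrank : (P z₁ ∘L Q z₁ : E →ₗ[𝕜] F).HasFiniteRange :=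
      LinearMap.HasFiniteRange.of_finite_dom.comp_right (Q z₁ : E →ₗ[𝕜] W)
    have hremainder := (ih (analyticAt_dslope hP) hQ).add
      (ih (P := fun _ ↦ P z₁) analyticAt_const (analyticAt_dslope hQ))
    refine (hremainder.add_polarTerm hrank).congr ?_
    filter_upwards [self_mem_nhdsWithin] with z hz
    have hpow : (z - z₁) ^ (-(N : ℤ)) = (z - z₁) ^ (-((N : ℤ) + 1)) * (z - z₁) := by
      rw [← zpow_add_one₀ (sub_ne_zero.2 hz)]
      congr 1
      ring
    rw [comp_eq_add_smul_dslope P Q z₁ z, Nat.cast_succ, ← smul_add, hpow, mul_smul, ← smul_add,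
      add_comm (P z₁ ∘L Q z₁)]

theorem exists_hasFiniteRankPrincipalPart_comp [FiniteDimensional 𝕜 W]
    {P : 𝕜 → W →L[𝕜] F} {Q : 𝕜 → E →L[𝕜] W} (hP : MeromorphicAt P z₁) (hQ : MeromorphicAt Q z₁) :
    ∃ N, HasFiniteRankPrincipalPart N (fun z ↦ P z ∘L Q z) z₁ := by
  obtain ⟨m, hm⟩ := hP
  obtain ⟨n, hn⟩ := hQ
  refine ⟨m + n, (hasFiniteRankPrincipalPart_zpow_smul_comp hm hn (m + n)).congr ?_⟩
  filter_upwards [self_mem_nhdsWithin] with z hz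
  have hz' : z - z₁ ≠ 0 := sub_ne_zero.2 hz
  rw [ContinuousLinearMap.smul_comp, ContinuousLinearMap.comp_smul, smul_smul, smul_smul,
    mul_assoc, ← pow_add, zpow_neg, zpow_natCast, inv_mul_cancel₀ (pow_ne_zero _ hz'), one_smul]

theorem HasFiniteRankPrincipalPart.meromorphicAt (hf : HasFiniteRankPrincipalPart N f z₁) :
    MeromorphicAt f z₁ := by
  obtain ⟨C, -, H, hH, hf⟩ := hf
  refine MeromorphicAt.congr ?_ (EventuallyEq.symm hf)
  have := hH.meromorphicAt
  fun_prop

end PrincipalPart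

section AnalyticFredholm

variable {𝕜 E : Type*} [NontriviallyNormedField 𝕜] [CompleteSpace 𝕜]
  [NormedAddCommGroup E] [NormedSpace 𝕜 E] [CompleteSpace E]

theorem exists_hasFiniteRankPrincipalPart_inverse_sub_comp {W : Type*} [NormedAddCommGroup W]
    [NormedSpace 𝕜 W] [FiniteDimensional 𝕜 W] {A : 𝕜 → E →L[𝕜] E} {z₁ : 𝕜}
    (hA : AnalyticAt 𝕜 A z₁) (hunit : IsUnit (A z₁)) (P : W →L[𝕜] E) (Q : E →L[𝕜] W) :
    ∃ N, HasFiniteRankPrincipalPart N (fun z ↦ (A z - P ∘L Q)⁻¹ʳ) z₁ := by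
  have hAunit : ∀ᶠ z in 𝓝[≠] z₁, IsUnit (A z) :=
    (hA.continuousAt.eventually (Units.isOpen.mem_nhds hunit)).filter_mono nhdsWithin_le_nhds
  have hAinv : AnalyticAt 𝕜 (fun z ↦ (A z)⁻¹ʳ) z₁ := by
    obtain ⟨u, hu⟩ := hunit
    exact (hu ▸ analyticAt_inverse u : AnalyticAt 𝕜 Ring.inverse (A z₁)).comp hA
  have hAinvP : AnalyticAt 𝕜 (fun z ↦ (A z)⁻¹ʳ ∘L P) z₁ :=
    analyticAt_clm_comp hAinv analyticAt_const
  have hSchur : MeromorphicAt (fun z ↦ (1 - Q ∘L (A z)⁻¹ʳ ∘L P)⁻¹ʳ) z₁ :=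
    meromorphicAt_inverse_of_finiteDimensional
      (analyticAt_const.sub (analyticAt_clm_comp analyticAt_const hAinvP))
  obtain hreg | hsing := eventually_isUnit_or_eventually_not_isUnit_s1 hSchur
  · obtain ⟨N, hN⟩ := exists_hasFiniteRankPrincipalPart_comp
      (meromorphicAt_clm_comp hAinvP.meromorphicAt hSchur)
      (analyticAt_clm_comp (P := fun _ ↦ Q) analyticAt_const hAinv).meromorphicAt
    refine ⟨N, ((HasFiniteRankPrincipalPart.of_analyticAt hAinv N).add hN).congr ?_⟩
    filter_upwards [hAunit, hreg] with z hz hz'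
    exact (inverse_sub_comp hz hz').symm
  · refine ⟨0, (HasFiniteRankPrincipalPart.of_analyticAt (f := 0) analyticAt_const 0).congr ?_⟩
    filter_upwards [hAunit, hsing] with z hz hz'
    exact (Ring.inverse_non_unit _ (mt (isUnit_sub_comp_iff hz).1 hz')).symm

theorem IsUnitModFiniteRank.exists_hasFiniteRankPrincipalPart_inverse {T : 𝕜 → E →L[𝕜] E} {z₁ : 𝕜}
    (hz₁ : IsUnitModFiniteRank (T z₁)) (hT : AnalyticAt 𝕜 T z₁) :
    ∃ N, HasFiniteRankPrincipalPart N (fun z ↦ (T z)⁻¹ʳ) z₁ := by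
  obtain ⟨G, hG, hunit⟩ := hz₁
  have : FiniteDimensional 𝕜 G.range := .of_fg (LinearMap.hasFiniteRange_iff_range.1 hG)
  obtain ⟨N, hN⟩ := exists_hasFiniteRankPrincipalPart_inverse_sub_comp
    (hT.add analyticAt_const) hunit G.range.subtypeL G.rangeRestrict
  have hfactor : ∀ z, T z + G - G.range.subtypeL ∘L G.rangeRestrict = T z :=
    fun z ↦ add_sub_cancel_right (T z) G
  exact ⟨N, hN.congr (.of_forall fun z ↦ congrArg Ring.inverse (hfactor z))⟩

theorem eventually_isUnit_of_isUnitModFiniteRank {U : Set 𝕜} (hUconn : IsPreconnected U)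
    {T : 𝕜 → E →L[𝕜] E} (hT : AnalyticOnNhd 𝕜 T U) (hfin : ∀ z ∈ U, IsUnitModFiniteRank (T z))
    {z₀ z₁ : 𝕜} (hz₀ : z₀ ∈ U) (hunit : IsUnit (T z₀)) (hz₁ : z₁ ∈ U) :
    ∀ᶠ z in 𝓝[≠] z₁, IsUnit (T z) := by
  have hmero : MeromorphicOn (fun z ↦ (T z)⁻¹ʳ) U := fun z hz ↦
    let ⟨_, hN⟩ := (hfin z hz).exists_hasFiniteRankPrincipalPart_inverse (hT z hz)
    hN.meromorphicAt
  have hnear : ∀ᶠ z in 𝓝 z₀, IsUnit (T z) :=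
    (hT z₀ hz₀).continuousAt.eventually (Units.isOpen.mem_nhds hunit)
  exact eventually_isUnit_of_isPreconnected hUconn hmero hz₀ hz₁
    (hnear.filter_mono nhdsWithin_le_nhds)

theorem analytic_fredholm_finite_dim_singularities_general {U : Set 𝕜} (hUopen : IsOpen U)
    (hUconn : IsPreconnected U) (T : 𝕜 → E →L[𝕜] E) (hT : AnalyticOnNhd 𝕜 T U)
    (hfin : ∀ z ∈ U, IsUnitModFiniteRank (T z)) (hunit : ∃ z₀ ∈ U, IsUnit (T z₀))
    {z₁ : 𝕜} (hz₁ : z₁ ∈ U) :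
    ∃ N : ℕ, 1 ≤ N ∧ ∃ F : Fin N → E →L[𝕜] E,
      (∀ j, FiniteDimensional 𝕜 (F j).range) ∧
      ∃ V : Set 𝕜, IsOpen V ∧ z₁ ∈ V ∧ V ⊆ U ∧
        ∃ H : 𝕜 → E →L[𝕜] E, AnalyticOnNhd 𝕜 H V ∧
          ∀ z ∈ V, z ≠ z₁ →
            IsUnit (T z) ∧
            (T z)⁻¹ʳ = H z + ∑ j : Fin N, (z - z₁) ^ (-(((j : ℕ) : ℤ) + 1)) • F j := by
  obtain ⟨z₀, hz₀, hunit⟩ := hunit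
  obtain ⟨N, hN⟩ := (hfin z₁ hz₁).exists_hasFiniteRankPrincipalPart_inverse (hT z₁ hz₁)
  obtain ⟨F, hF, H, hH, hTH⟩ := hN.succ
  have hTunit := eventually_isUnit_of_isUnitModFiniteRank hUconn hT hfin hz₀ hunit hz₁
  obtain ⟨V, hV, hVopen, hz₁V⟩ := eventually_nhds_iff.1 <|
    (hUopen.eventually_mem hz₁).and <| hH.eventually_analyticAt.and <|
      eventually_nhdsWithin_iff.1 (hTunit.and hTH)
  exact ⟨N + 1, N.succ_pos, F, fun j ↦ .of_fg (LinearMap.hasFiniteRange_iff_range.1 (hF j)),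
    V, hVopen, hz₁V, fun z hz ↦ (hV z hz).1, H, fun z hz ↦ (hV z hz).2.1,
    fun z hz ↦ (hV z hz).2.2⟩

end AnalyticFredholm

/-- Finite-dimensional singularities in the analytic Fredholm theorem: near a point `λ₁`
where `id + R λ₁` is not invertible, the inverse family `(id + R λ)⁻¹` is the sum of a
holomorphic family and finitely many finite-rank Laurent coefficients
`(λ − λ₁)^{-j} F_j`, `1 ≤ j ≤ N`. -/
theorem analytic_fredholm_finite_dim_singularities
    {E : Type*} [NormedAddCommGroup E] [NormedSpace ℂ E] [CompleteSpace E]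
    {U : Set ℂ} (hUopen : IsOpen U) (hUne : U.Nonempty) (hUconn : IsConnected U)
    (R : ℂ → E →L[ℂ] E) (hRan : AnalyticOnNhd ℂ R U)
    (hRcpt : ∀ z ∈ U, IsCompactOperator (R z))
    (hinj : ∃ z₀ ∈ U, Function.Injective ((1 + R z₀ : E →L[ℂ] E) : E → E))
    {z₁ : ℂ} (hz₁ : z₁ ∈ U) (hsing : ¬ IsUnit (1 + R z₁)) :
    ∃ (N : ℕ), 1 ≤ N ∧ ∃ (F : Fin N → E →L[ℂ] E),
      (∀ j, FiniteDimensional ℂ (LinearMap.range (F j : E →ₗ[ℂ] E))) ∧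
      ∃ (V : Set ℂ), IsOpen V ∧ z₁ ∈ V ∧ V ⊆ U ∧
        ∃ (H : ℂ → E →L[ℂ] E), AnalyticOnNhd ℂ H V ∧
          ∀ z ∈ V, z ≠ z₁ →
            IsUnit (1 + R z) ∧
            Ring.inverse (1 + R z)
              = H z + ∑ j : Fin N, ((z - z₁) ^ (-(((j : ℕ) : ℤ) + 1))) • F j := by
  obtain ⟨z₀, hz₀, hinj⟩ := hinj
  exact analytic_fredholm_finite_dim_singularities_general hUopen hUconn.isPreconnected
    (fun z ↦ 1 + R z) (analyticOnNhd_const.add hRan)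
    (fun z hz ↦ isUnitModFiniteRank_one_add (hRcpt z hz))
    ⟨z₀, hz₀, isUnit_one_add_of_injective (hRcpt z₀ hz₀) hinj⟩ hz₁
end
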